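/- arXiv:1908.05326 — 3 statements merged into one kernel-verified Lean document; each statement's English description precedes it below -/
import Mathlib

section
/- Let X be a semi-inner product C*-module over a C*-algebra A, p ∈ A, e ∈ X with ⟨e,e⟩ idempotent in A, and fix a ∈ A. For f, g Fréchet differentiable at p define [f,g]_a = ⟨Df(p)(a), Dg(p)(a)⟩₁ + ⟨f(p), g(p)⟩₁ − D(t ↦ ⟨f(t), g(t)⟩₁)(p)(a), where ⟨x,y⟩₁ = ⟨x,y⟩ − ⟨x,e⟩⟨e,y⟩. Then [f,f]_a ≥ 0 in A; in fact [f,g]_a = ⟨u − e⟨e,u⟩, v − e⟨e,v⟩⟩ where u = Df(p)(a) − f(p) and v = Dg(p)(a) − g(p). -/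
/-!
A continuous bilinear map `B` satisfies
`B (f' a) (g' a) + B (f p) (g p) - D(B(f, g))(p)(a) = B (f' a - f p) (g' a - g p)`, since the
product rule supplies the mixed terms. For `B = ⟨·, ·⟩₁` the right-hand side is the semi-inner
product of the vectors `x - e⟨e, x⟩`: when `⟨e, e⟩` is idempotent, `e - e⟨e, e⟩` has length zero,
hence is orthogonal to everything, so that `⟨e, e⟩⟨e, v⟩ = ⟨e, v⟩`.
-/

open scoped InnerProductSpace RightActions

section OrderedStarRing

theorem star_eq_neg_of_mul_self_eq_neg_one {R : Type*} [Ring R] [StarRing R] [PartialOrder R]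
    [StarOrderedRing R] [IsAddTorsionFree R] {j : R} [IsStarNormal j] (hj : j * j = -1) :
    star j = -j := by
  have hcomm : Commute (star j) j := star_comm_self' j
  have hj_star : star j * star j = -1 := by rw [← star_mul, hj, star_neg, star_one]
  set w := star j * j with hw
  have hw_sq : w * w = 1 := by
    rw [hw, Commute.mul_mul_mul_comm hcomm.symm, hj, hj_star, neg_mul_neg, one_mul]
  have hw_star : star (1 - w) = 1 - w := by
    rw [star_sub, star_one, hw, star_mul, star_star]
  have mul_one_sub : w * (1 - w) = -(1 - w) := by rw [mul_sub, hw_sq, mul_one, neg_sub]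
  have one_sub_sq : (1 - w) * (1 - w) = 2 • (1 - w) := by
    rw [sub_mul 1 w, mul_one_sub, one_mul, sub_neg_eq_add, two_nsmul]
  -- `2 (1 - w)` is both `(1 - w)⋆ (1 - w)` and `-(j (1 - w))⋆ (j (1 - w))`.
  have h_nonneg : 0 ≤ 2 • (1 - w) := by
    simpa only [hw_star, one_sub_sq] using star_mul_self_nonneg (1 - w)
  have h_nonpos : 0 ≤ -(2 • (1 - w)) :=
    calc 0 ≤ star (j * (1 - w)) * (j * (1 - w)) := star_mul_self_nonneg _
      _ = (1 - w) * (w * (1 - w)) := by rw [star_mul, hw_star, hw]; simp only [mul_assoc]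
      _ = -(2 • (1 - w)) := by rw [mul_one_sub, mul_neg, one_sub_sq]
  have hw_one : w = 1 := by
    have h : 2 • (1 - w) = 0 := le_antisymm (neg_nonneg.mp h_nonpos) h_nonneg
    exact (sub_eq_zero.mp ((nsmul_eq_zero_iff_right two_ne_zero).mp h)).symm
  calc star j = -(star j * (j * j)) := by rw [hj, mul_neg_one, neg_neg]
    _ = -j := by rw [← mul_assoc, ← hw, hw_one, one_mul]

theorem starModule_complex_of_starOrderedRing {A : Type*} [Ring A] [StarRing A]
    [PartialOrder A] [StarOrderedRing A] [TopologicalSpace A] [T2Space A] [ContinuousStar A]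
    [Algebra ℂ A] [ContinuousSMul ℝ A] : StarModule ℂ A where
  star_smul c a := by
    have : IsAddTorsionFree A := .of_isTorsionFree ℂ A
    have star_real_smul (r : ℝ) (b : A) : star (r • b) = r • star b :=
      map_real_smul (starAddEquiv : A ≃+ A) continuous_star r b
    have star_I_smul (b : A) : star (Complex.I • b) = -(Complex.I • star b) := by
      have : IsStarNormal (algebraMap ℂ A Complex.I) := ⟨(Algebra.commutes _ _).symm⟩
      have hI : algebraMap ℂ A Complex.I * algebraMap ℂ A Complex.I = -1 := by
        rw [← map_mul, Complex.I_mul_I, map_neg, map_one]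
      rw [Algebra.smul_def, star_mul, star_eq_neg_of_mul_self_eq_neg_one hI, mul_neg,
        ← Algebra.commutes, ← Algebra.smul_def]
    have smul_eq (z : ℂ) (b : A) : z • b = z.re • b + z.im • (Complex.I • b) := by
      conv_lhs => rw [← Complex.re_add_im z]
      rw [add_smul, mul_smul, Complex.coe_smul, Complex.coe_smul]
    rw [smul_eq c, smul_eq (star c), star_add, star_real_smul, star_real_smul, star_I_smul]
    simp

/-- The C⋆-algebra structure of a complete complex normed C⋆-ring whose order makes it a
`StarOrderedRing`; conjugate-linearity of the involution is a consequence of the order. -/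
abbrev cstarAlgebraOfStarOrderedRing {A : Type*} [NormedRing A] [StarRing A] [CStarRing A]
    [PartialOrder A] [StarOrderedRing A] [NormedAlgebra ℂ A] [CompleteSpace A] :
    CStarAlgebra A where
  toStarModule := starModule_complex_of_starOrderedRing

theorem eq_zero_of_nonneg_of_forall_nsmul_le {A : Type*} [NonUnitalCStarAlgebra A]
    [PartialOrder A] [StarOrderedRing A] {a b : A} (ha : 0 ≤ a) (h : ∀ n : ℕ, n • a ≤ b) :
    a = 0 := by
  have norm_bound (n : ℕ) : n • ‖a‖ ≤ ‖b‖ := by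
    rw [← RCLike.norm_nsmul ℝ]
    exact CStarAlgebra.norm_le_norm_of_nonneg_of_le (nsmul_nonneg ha n) (h n)
  by_contra hne
  obtain ⟨n, hn⟩ := exists_lt_nsmul (norm_pos_iff.mpr hne) ‖b‖
  exact (norm_bound n).not_gt hn

end OrderedStarRing

section BilinearMap

/-- A bounded biadditive map between real normed spaces, as a continuous bilinear map. -/
noncomputable def continuousBilinearOfBound {X Y Z : Type*} [SeminormedAddCommGroup X]
    [NormedSpace ℝ X] [SeminormedAddCommGroup Y] [NormedSpace ℝ Y] [NormedAddCommGroup Z]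
    [NormedSpace ℝ Z] (b : X →+ Y →+ Z) (C : ℝ) (hb : ∀ x y, ‖b x y‖ ≤ C * ‖x‖ * ‖y‖) :
    X →L[ℝ] Y →L[ℝ] Z :=
  (LinearMap.mk₂ ℝ (fun x y ↦ b x y) (by simp)
    (fun c x y ↦ map_real_smul (b.flip y)
      (AddMonoidHomClass.continuous_of_bound _ (C * ‖y‖)
        fun x ↦ (hb x y).trans_eq (mul_right_comm _ _ _)) c x)
    (by simp)
    (fun c x y ↦ map_real_smul (b x)
      (AddMonoidHomClass.continuous_of_bound _ (C * ‖x‖) (hb x)) c y)).mkContinuous₂ C hb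

theorem bilinear_add_sub_apply_of_hasFDerivAt {𝕜 E F G H : Type*} [NontriviallyNormedField 𝕜]
    [NormedAddCommGroup E] [NormedSpace 𝕜 E] [NormedAddCommGroup F] [NormedSpace 𝕜 F]
    [NormedAddCommGroup G] [NormedSpace 𝕜 G] [NormedAddCommGroup H] [NormedSpace 𝕜 H]
    (B : F →L[𝕜] G →L[𝕜] H) {f : E → F} {g : E → G} {f' : E →L[𝕜] F} {g' : E →L[𝕜] G}
    {k : E →L[𝕜] H} {p : E} (hf : HasFDerivAt f f' p) (hg : HasFDerivAt g g' p)
    (hk : HasFDerivAt (fun t ↦ B (f t) (g t)) k p) (a : E) :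
    B (f' a) (g' a) + B (f p) (g p) - k a = B (f' a - f p) (g' a - g p) := by
  have product_rule : k a = B (f p) (g' a) + B (f' a) (g p) :=
    congrArg (· a) (hk.unique (B.hasFDerivAt_of_bilinear hf hg))
  simp only [product_rule, map_sub, sub_apply]
  abel

end BilinearMap

/-- A semi-inner product module over `A`: a right action of `A` on `X`, written `x <• a`, and a
positive semidefinite `A`-valued inner product which is `A`-linear in the second variable. Unlike
in `CStarModule`, nonzero vectors may have length zero and `X` carries no norm. The action need not
be associative or additive. -/
class SemiInnerProductModule (A X : Type*) [NonUnitalRing A] [StarRing A] [PartialOrder A]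
    [AddCommGroup X] extends Inner A X, SMul Aᵐᵒᵖ X where
  inner_add_right (x y z : X) : inner x (y + z) = inner x y + inner x z
  inner_smul_right (x y : X) (a : A) : inner x (y <• a) = inner x y * a
  star_inner (x y : X) : star (inner x y) = inner y x
  inner_self_nonneg (x : X) : 0 ≤ inner x x

namespace SemiInnerProductModule

section Algebra

variable {A X : Type*} [NonUnitalRing A] [StarRing A] [PartialOrder A] [AddCommGroup X]
  [SemiInnerProductModule A X]

theorem inner_add_left (x y z : X) : ⟪x + y, z⟫_A = ⟪x, z⟫_A + ⟪y, z⟫_A := by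
  rw [← star_inner, inner_add_right, star_add, star_inner, star_inner]

theorem inner_smul_left (x y : X) (a : A) : ⟪x <• a, y⟫_A = star a * ⟪x, y⟫_A := by
  rw [← star_inner, inner_smul_right, star_mul, star_inner]

variable (A X) in
/-- The semi-inner product as a biadditive map. -/
def innerAddHom : X →+ X →+ A :=
  .mk' (fun x ↦ .mk' (inner A x) (inner_add_right x)) fun x y ↦
    AddMonoidHom.ext (inner_add_left x y)

theorem inner_sub_right (x y z : X) : ⟪x, y - z⟫_A = ⟪x, y⟫_A - ⟪x, z⟫_A :=
  map_sub (innerAddHom A X x) y z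

theorem inner_sub_left (x y z : X) : ⟪x - y, z⟫_A = ⟪x, z⟫_A - ⟪y, z⟫_A :=
  map_sub ((innerAddHom A X).flip z) x y

variable (A)

/-- The reduced semi-inner product `⟨x, y⟩₁ = ⟨x, y⟩ - ⟨x, e⟩⟨e, y⟩`. -/
def reducedInner (e x y : X) : A := ⟪x, y⟫_A - ⟪x, e⟫_A * ⟪e, y⟫_A

/-- The component `x - e⟨e, x⟩` of `x` complementary to `e`; it is orthogonal to `e` when `⟨e, e⟩`
is idempotent. -/
def complement (e x : X) : X := x - e <• ⟪e, x⟫_A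

end Algebra

section CStarAlgebra

variable {A X : Type*} [NonUnitalCStarAlgebra A] [PartialOrder A] [StarOrderedRing A]
  [AddCommGroup X] [SemiInnerProductModule A X]

theorem inner_eq_zero_of_inner_self_eq_zero {z : X} (hz : ⟪z, z⟫_A = 0) (x : X) :
    ⟪z, x⟫_A = 0 := by
  set c := ⟪z, x⟫_A with hc
  have expand (n : ℕ) : ⟪x - z <• (n • c), x - z <• (n • c)⟫_A
      = ⟪x, x⟫_A - n • (star c * c) - n • (star c * c) := by
    simp only [inner_sub_left, inner_sub_right, inner_smul_left, inner_smul_right, hz, ← hc,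
      ← star_inner z x, star_nsmul, smul_mul_assoc, mul_smul_comm, mul_zero, sub_zero]
  have bound (n : ℕ) : n • (star c * c) ≤ ⟪x, x⟫_A :=
    calc n • (star c * c) ≤ ⟪x, x⟫_A - n • (star c * c) :=
          sub_nonneg.mp (expand n ▸ inner_self_nonneg _)
      _ ≤ ⟪x, x⟫_A := sub_le_self _ (nsmul_nonneg (star_mul_self_nonneg c) n)
  exact (CStarRing.star_mul_self_eq_zero_iff c).mp
    (eq_zero_of_nonneg_of_forall_nsmul_le (star_mul_self_nonneg c) bound)

theorem inner_self_mul_inner {e : X} (he : IsIdempotentElem ⟪e, e⟫_A) (x : X) :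
    ⟪e, e⟫_A * ⟪e, x⟫_A = ⟪e, x⟫_A := by
  have complement_null : ⟪complement A e e, complement A e e⟫_A = 0 := by
    simp only [complement, inner_sub_left, inner_sub_right, inner_smul_left, inner_smul_right,
      star_inner, he.eq, sub_self, zero_mul]
  have h := inner_eq_zero_of_inner_self_eq_zero complement_null x
  rw [complement, inner_sub_left, inner_smul_left, star_inner, sub_eq_zero] at h
  exact h.symm

theorem inner_complement_complement {e : X} (he : IsIdempotentElem ⟪e, e⟫_A) (x y : X) :
    ⟪complement A e x, complement A e y⟫_A = reducedInner A e x y := by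
  simp only [complement, reducedInner, inner_sub_left, inner_sub_right, inner_smul_left,
    inner_smul_right, star_inner, sub_mul, mul_assoc, inner_self_mul_inner he, sub_self, sub_zero]

end CStarAlgebra

section Derivative

variable {A X E : Type*} [NonUnitalCStarAlgebra A] [PartialOrder A] [NormedAddCommGroup X]
  [NormedSpace ℝ X] [SemiInnerProductModule A X] [NormedAddCommGroup E] [NormedSpace ℝ E]

/-- The reduced semi-inner product as a continuous real bilinear map. -/
noncomputable def reducedInnerCLM {C : ℝ} (hC : ∀ x y : X, ‖⟪x, y⟫_A‖ ≤ C * ‖x‖ * ‖y‖) (e : X) :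
    X →L[ℝ] X →L[ℝ] A :=
  let B := continuousBilinearOfBound (innerAddHom A X) C hC
  B - (ContinuousLinearMap.mul ℝ A).bilinearComp (B.flip e) (B e)

theorem reducedInnerCLM_apply {C : ℝ} (hC : ∀ x y : X, ‖⟪x, y⟫_A‖ ≤ C * ‖x‖ * ‖y‖) (e x y : X) :
    reducedInnerCLM hC e x y = reducedInner A e x y :=
  rfl

theorem reducedInner_add_sub_apply_of_hasFDerivAt [StarOrderedRing A] {C : ℝ}
    (hC : ∀ x y : X, ‖⟪x, y⟫_A‖ ≤ C * ‖x‖ * ‖y‖) {e : X} (he : IsIdempotentElem ⟪e, e⟫_A)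
    {f g : E → X} {f' g' : E →L[ℝ] X} {k : E →L[ℝ] A} {p : E} (hf : HasFDerivAt f f' p)
    (hg : HasFDerivAt g g' p) (hk : HasFDerivAt (fun t ↦ reducedInner A e (f t) (g t)) k p)
    (a : E) :
    reducedInner A e (f' a) (g' a) + reducedInner A e (f p) (g p) - k a
      = ⟪complement A e (f' a - f p), complement A e (g' a - g p)⟫_A := by
  simp only [inner_complement_complement he, ← reducedInnerCLM_apply hC] at hk ⊢
  exact bilinear_add_sub_apply_of_hasFDerivAt (reducedInnerCLM hC e) hf hg hk a

end Derivative

end SemiInnerProductModule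

open SemiInnerProductModule in
theorem stmt_5_general {A X E : Type*} [NonUnitalCStarAlgebra A] [PartialOrder A]
    [StarOrderedRing A] [NormedAddCommGroup X] [NormedSpace ℝ X] [SemiInnerProductModule A X]
    [NormedAddCommGroup E] [NormedSpace ℝ E] {C : ℝ}
    (hC : ∀ x y : X, ‖⟪x, y⟫_A‖ ≤ C * ‖x‖ * ‖y‖) {e : X} (he : IsIdempotentElem ⟪e, e⟫_A)
    {f g : E → X} {f' g' : E →L[ℝ] X} {kfg' kff' : E →L[ℝ] A} {p : E}
    (hf : HasFDerivAt f f' p) (hg : HasFDerivAt g g' p)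
    (hkfg : HasFDerivAt (fun t ↦ reducedInner A e (f t) (g t)) kfg' p)
    (hkff : HasFDerivAt (fun t ↦ reducedInner A e (f t) (f t)) kff' p) (a : E) :
    reducedInner A e (f' a) (g' a) + reducedInner A e (f p) (g p) - kfg' a
      = ⟪complement A e (f' a - f p), complement A e (g' a - g p)⟫_A
    ∧ 0 ≤ reducedInner A e (f' a) (f' a) + reducedInner A e (f p) (f p) - kff' a := by
  refine ⟨reducedInner_add_sub_apply_of_hasFDerivAt hC he hf hg hkfg a, ?_⟩
  rw [reducedInner_add_sub_apply_of_hasFDerivAt hC he hf hf hkff]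
  exact inner_self_nonneg _

/-- With ⟨x,y⟩₁ = ⟨x,y⟩ − ⟨x,e⟩⟨e,y⟩ (⟨e,e⟩ idempotent), the bracket
[f,g]_a = ⟨Df(p)(a), Dg(p)(a)⟩₁ + ⟨f(p), g(p)⟩₁ − D(t ↦ ⟨f(t), g(t)⟩₁)(p)(a)
equals ⟨u − e⟨e,u⟩, v − e⟨e,v⟩⟩ for u = Df(p)(a) − f(p), v = Dg(p)(a) − g(p);
in particular [f,f]_a ≥ 0. -/
theorem stmt_5 {A : Type*} [NormedRing A] [StarRing A] [CStarRing A] [PartialOrder A]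
    [StarOrderedRing A] [NormedAlgebra ℂ A] [CompleteSpace A]
    {X : Type*} [NormedAddCommGroup X] [NormedSpace ℝ X]
    (smul : X → A → X)
    (ip : X → X → A)
    (h_add : ∀ x y z : X, ip x (y + z) = ip x y + ip x z)
    (h_add' : ∀ x y z : X, ip (x + y) z = ip x z + ip y z)
    (h_smul : ∀ (x y : X) (a : A), ip x (smul y a) = ip x y * a)
    (h_rsmul : ∀ (c : ℝ) (x y : X), ip x (c • y) = c • ip x y)
    (h_star : ∀ x y : X, star (ip x y) = ip y x)
    (h_pos : ∀ x : X, 0 ≤ ip x x)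
    (h_bound : ∀ x y : X, ‖ip x y‖ ≤ ‖x‖ * ‖y‖)
    (h_sm_add : ∀ (x y : X) (a : A), smul (x + y) a = smul x a + smul y a)
    (h_sm_mul : ∀ (x : X) (a b : A), smul x (a * b) = smul (smul x a) b)
    (e : X) (h_idem : ip e e * ip e e = ip e e)
    (f g : A → X) (f' g' : A →L[ℝ] X) (kfg' kff' : A →L[ℝ] A) (p a : A)
    (hf : HasFDerivAt f f' p) (hg : HasFDerivAt g g' p)
    (hkfg : HasFDerivAt (fun t => ip (f t) (g t) - ip (f t) e * ip e (g t)) kfg' p)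
    (hkff : HasFDerivAt (fun t => ip (f t) (f t) - ip (f t) e * ip e (f t)) kff' p) :
    ((ip (f' a) (g' a) - ip (f' a) e * ip e (g' a))
      + (ip (f p) (g p) - ip (f p) e * ip e (g p)) - kfg' a)
      = ip ((f' a - f p) - smul e (ip e (f' a - f p)))
           ((g' a - g p) - smul e (ip e (g' a - g p)))
    ∧ 0 ≤ ((ip (f' a) (f' a) - ip (f' a) e * ip e (f' a))
      + (ip (f p) (f p) - ip (f p) e * ip e (f p)) - kff' a) := by
  let _ : CStarAlgebra A := cstarAlgebraOfStarOrderedRing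
  let _ : SemiInnerProductModule A X := {
    inner := ip, smul := fun a x ↦ smul x a.unop, inner_add_right := h_add,
    inner_smul_right := h_smul, star_inner := h_star, inner_self_nonneg := h_pos }
  exact stmt_5_general (C := 1) (fun x y ↦ (h_bound x y).trans_eq (by rw [one_mul])) h_idem hf hg
    hkfg hkff a
end

section
/- Let X be a semi-inner product C*-module over a C*-algebra A, x₀, y₀, x₁, y₁ ∈ X, (r₁,…,rₙ) a probability vector, p ∈ A, and f = (f₁,…,fₙ), g = (g₁,…,gₙ) tuples of maps A → X Fréchet differentiable at p such that ‖Df(p) − \widehat{(x₀+y₀)/2}‖ ≤ ‖(x₀−y₀)/2‖ and ‖Dg(p) − \widehat{(x₁+y₁)/2}‖ ≤ ‖(x₁−y₁)/2‖, where for x ∈ X, x̂ : A → Xⁿ is the map a ↦ (xa, …, xa). Then for all a ∈ A: ‖Σᵢ rᵢ⟨Dfᵢ(p)(a), Dgᵢ(p)(a)⟩ − ⟨Σᵢ rᵢDfᵢ(p)(a), Σᵢ rᵢDgᵢ(p)(a)⟩‖ ≤ (1/4)‖x₀−y₀‖‖x₁−y₁‖‖a‖². -/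
/-!
For a probability vector `r`, the covariance `∑ rᵢ⟨uᵢ, vᵢ⟩ - ⟨∑ rᵢuᵢ, ∑ rᵢvᵢ⟩` is itself a
semi-inner product on `Xⁿ` with values in `A`, because it equals the weighted sum of the inner
products of the centered tuples. It does not change when constant tuples are subtracted from `u`
and `v`, so Cauchy–Schwarz bounds it by the distances from `u` and `v` to any constant tuples.
For `u = Df(p)(a)` and `v = Dg(p)(a)`, the constants are the midpoints of `x₀a, y₀a` and of
`x₁a, y₁a`.
-/

section StarModule

variable {A : Type*} [NormedRing A] [StarRing A] [CStarRing A] [PartialOrder A] [StarOrderedRing A]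

theorem star_eq_neg_of_mul_self_eq_neg_one_s8 {j : A} [IsStarNormal j] (hj : j * j = -1) :
    star j = -j := by
  set e := star j * j with he
  have hsj : star j * star j = -1 := by rw [← star_mul, hj, star_neg, star_one]
  have hee : e * e = 1 := by
    rw [he, (star_comm_self (x := j)).symm.mul_mul_mul_comm, hsj, hj, neg_mul_neg, one_mul]
  have hed : e * (1 - e) = -(1 - e) := by rw [mul_sub, hee, mul_one, neg_sub]
  -- `j (1 - e)` and `1 - e` have opposite squares `star x * x`, so both squares vanish.
  have hjd : star (j * (1 - e)) * (j * (1 - e)) = -(star (1 - e) * (1 - e)) := by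
    calc star (j * (1 - e)) * (j * (1 - e)) = star (1 - e) * (e * (1 - e)) := by
          simp only [star_mul, he, mul_assoc]
      _ = -(star (1 - e) * (1 - e)) := by rw [hed, mul_neg]
  have e_eq_one : e = 1 := by
    refine (sub_eq_zero.mp ((CStarRing.star_mul_self_eq_zero_iff _).mp
      (le_antisymm ?_ (star_mul_self_nonneg (1 - e))))).symm
    exact neg_nonneg.mp (hjd ▸ star_mul_self_nonneg (j * (1 - e)))
  calc star j = -(e * j) := by rw [he, mul_assoc, hj, mul_neg, mul_one, neg_neg]
    _ = -j := by rw [e_eq_one, one_mul]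

theorem starModule_complex_of_starOrderedRing_s8 [NormedAlgebra ℂ A] : StarModule ℂ A := by
  have star_real (c : ℝ) (a : A) : star (c • a) = c • star a :=
    map_real_smul (starAddEquiv : A ≃+ A) continuous_star c a
  have star_I (a : A) : star (Complex.I • a) = -(Complex.I • star a) := by
    set j := algebraMap ℂ A Complex.I with hj
    have : IsStarNormal j := ⟨(Algebra.commutes Complex.I (star j)).symm⟩
    have hjj : j * j = -1 := by rw [hj, ← map_mul, Complex.I_mul_I, map_neg, map_one]
    rw [Algebra.smul_def, star_mul, star_eq_neg_of_mul_self_eq_neg_one_s8 hjj, mul_neg,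
      ← Algebra.commutes, ← Algebra.smul_def]
  have smul_eq (z : ℂ) (a : A) : z • a = z.re • a + z.im • Complex.I • a := by
    conv_lhs => rw [← Complex.re_add_im z]
    rw [add_smul, mul_smul, Complex.coe_smul, Complex.coe_smul]
  refine ⟨fun z a => ?_⟩
  rw [smul_eq z a, smul_eq (star z), star_add, star_real, star_real, star_I]
  simp

end StarModule

section Covariance

variable {R M N ι : Type*} [CommRing R] [AddCommGroup M] [Module R M] [AddCommGroup N] [Module R N]
  [Fintype ι]

/-- The covariance `∑ i, r i • B (u i) (v i) - B (∑ i, r i • u i) (∑ i, r i • v i)` of two tuples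
with respect to the weights `r` and the bilinear map `B`, as a bilinear map on tuples. -/
def weightedCovariance (B : M →ₗ[R] M →ₗ[R] N) (r : ι → R) : (ι → M) →ₗ[R] (ι → M) →ₗ[R] N :=
  let mean : (ι → M) →ₗ[R] M := ∑ i, r i • LinearMap.proj i
  ∑ i, r i • B.compl₁₂ (LinearMap.proj i) (LinearMap.proj i) - B.compl₁₂ mean mean

variable (B : M →ₗ[R] M →ₗ[R] N) {r : ι → R}

theorem weightedCovariance_apply (r : ι → R) (u v : ι → M) :
    weightedCovariance B r u v =
      ∑ i, r i • B (u i) (v i) - B (∑ i, r i • u i) (∑ i, r i • v i) := by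
  simp [weightedCovariance]

theorem weightedCovariance_const_left (hr : ∑ i, r i = 1) (w : M) (v : ι → M) :
    weightedCovariance B r (fun _ => w) v = 0 := by
  simp [weightedCovariance_apply, ← Finset.sum_smul, hr]

theorem weightedCovariance_const_right (hr : ∑ i, r i = 1) (u : ι → M) (w : M) :
    weightedCovariance B r u (fun _ => w) = 0 := by
  simp [weightedCovariance_apply, ← Finset.sum_smul, hr]

theorem weightedCovariance_sub_const (hr : ∑ i, r i = 1) (u v : ι → M) (w z : M) :
    weightedCovariance B r (u - fun _ => w) (v - fun _ => z) = weightedCovariance B r u v := by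
  simp only [map_sub, LinearMap.sub_apply, weightedCovariance_const_left B hr,
    weightedCovariance_const_right B hr, sub_zero]

theorem weightedCovariance_eq_sum_centered (hr : ∑ i, r i = 1) (u v : ι → M) :
    weightedCovariance B r u v =
      ∑ i, r i • B (u i - ∑ k, r k • u k) (v i - ∑ k, r k • v k) := by
  have mean_centered : ∑ i, r i • (u i - ∑ k, r k • u k) = 0 := by
    simp only [smul_sub, Finset.sum_sub_distrib, ← Finset.sum_smul, hr, one_smul, sub_self]
  rw [← weightedCovariance_sub_const B hr u v (∑ k, r k • u k) (∑ k, r k • v k),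
    weightedCovariance_apply]
  simp only [Pi.sub_apply, mean_centered, map_zero, LinearMap.zero_apply, sub_zero]

end Covariance

/-- `B` is an `A`-valued semi-inner product on `X`, linear over `A` in the second variable for the
right action `act`. No compatibility of `act` with the operations of `X` is required: the values
of `B` satisfy the corresponding identities automatically. -/
structure IsSemiInnerProduct {A X : Type*} [NonUnitalRing A] [Module ℝ A] [Star A] [LE A]
    [AddCommGroup X] [Module ℝ X] (B : X →ₗ[ℝ] X →ₗ[ℝ] A) (act : X → A → X) : Prop where
  apply_act_right (x y : X) (a : A) : B x (act y a) = B x y * a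
  star_apply (x y : X) : star (B x y) = B y x
  apply_self_nonneg (x : X) : 0 ≤ B x x

namespace IsSemiInnerProduct

theorem apply_act_left {A X : Type*} [NonUnitalRing A] [Module ℝ A] [StarRing A] [LE A]
    [AddCommGroup X] [Module ℝ X] {B : X →ₗ[ℝ] X →ₗ[ℝ] A} {act : X → A → X}
    (hB : IsSemiInnerProduct B act) (x y : X) (a : A) :
    B (act x a) y = star a * B x y := by
  rw [← hB.star_apply, hB.apply_act_right, star_mul, hB.star_apply]

variable {A : Type*} [NonUnitalCStarAlgebra A] [PartialOrder A] [StarOrderedRing A]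
  {X : Type*} [AddCommGroup X] [Module ℝ X] {B : X →ₗ[ℝ] X →ₗ[ℝ] A} {act : X → A → X}

theorem smul_star_mul_self_le (hB : IsSemiInnerProduct B act) (x y : X) (t : ℝ) :
    (2 * t - t ^ 2 * ‖B x x‖) • (star (B x y) * B x y) ≤ B y y := by
  set c := B x y with hc
  have expand : B (act x (t • c) - y) (act x (t • c) - y) =
      t ^ 2 • (star c * B x x * c) - (2 * t) • (star c * c) + B y y := by
    simp only [map_sub, LinearMap.sub_apply, hB.apply_act_left, hB.apply_act_right, star_smul,
      star_trivial, smul_mul_assoc, mul_smul_comm, smul_smul, ← sq, two_mul, add_smul,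
      ← hB.star_apply x y, ← hc, mul_assoc]
    abel
  have conjugate_le : t ^ 2 • (star c * B x x * c) ≤ (t ^ 2 * ‖B x x‖) • (star c * c) := by
    rw [mul_smul]
    exact smul_le_smul_of_nonneg_left (CStarAlgebra.star_left_conjugate_le_norm_smul
      (.of_nonneg (hB.apply_self_nonneg x))) (sq_nonneg t)
  have nonneg := expand ▸ hB.apply_self_nonneg (act x (t • c) - y)
  rw [sub_smul, ← sub_nonneg]
  refine (add_nonneg nonneg (sub_nonneg.mpr conjugate_le)).trans_eq ?_
  abel

theorem norm_apply_sq_le (hB : IsSemiInnerProduct B act) (x y : X) :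
    ‖B x y‖ ^ 2 ≤ ‖B x x‖ * ‖B y y‖ := by
  have quadratic_nonneg (t : ℝ) :
      0 ≤ ‖B x x‖ * ‖B x y‖ ^ 2 * (t * t) + -(2 * ‖B x y‖ ^ 2) * t + ‖B y y‖ := by
    suffices (2 * t - t ^ 2 * ‖B x x‖) * ‖B x y‖ ^ 2 ≤ ‖B y y‖ by linarith
    rcases le_total (2 * t - t ^ 2 * ‖B x x‖) 0 with hs | hs
    · exact (mul_nonpos_of_nonpos_of_nonneg hs (sq_nonneg _)).trans (norm_nonneg _)
    · have := CStarAlgebra.norm_le_norm_of_nonneg_of_le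
        (smul_nonneg hs (star_mul_self_nonneg (B x y))) (hB.smul_star_mul_self_le x y t)
      rwa [norm_smul, Real.norm_of_nonneg hs, CStarRing.norm_star_mul_self, ← sq] at this
  have discrim_nonpos := discrim_le_zero quadratic_nonneg
  rw [discrim] at discrim_nonpos
  rcases (sq_nonneg ‖B x y‖).eq_or_lt with h | h
  · rw [← h]
    positivity
  · refine le_of_mul_le_mul_left ?_ h
    linarith

variable {ι : Type*} [Fintype ι] {r : ι → ℝ}

protected theorem weightedCovariance (hB : IsSemiInnerProduct B act) (hr : r ∈ stdSimplex ℝ ι) :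
    IsSemiInnerProduct (weightedCovariance B r) (fun u a i => act (u i) a) where
  apply_act_right u v a := by
    have apply_mean_act (x : X) : B x (∑ i, r i • act (v i) a) = B x (∑ i, r i • v i) * a := by
      simp only [map_sum, map_smul, hB.apply_act_right, Finset.sum_mul, smul_mul_assoc]
    simp only [weightedCovariance_apply, apply_mean_act, hB.apply_act_right, sub_mul,
      Finset.sum_mul, smul_mul_assoc]
  star_apply u v := by
    simp only [weightedCovariance_apply, star_sub, star_sum, star_smul, star_trivial,
      hB.star_apply]
  apply_self_nonneg u := by
    rw [weightedCovariance_eq_sum_centered B hr.2]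
    exact Finset.sum_nonneg fun i _ => smul_nonneg (hr.1 i) (hB.apply_self_nonneg _)

theorem norm_weightedCovariance_self_le (hB : IsSemiInnerProduct B act)
    (hr : r ∈ stdSimplex ℝ ι) (u : ι → X) :
    ‖weightedCovariance B r u u‖ ≤ ‖∑ i, B (u i) (u i)‖ := by
  refine CStarAlgebra.norm_le_norm_of_nonneg_of_le
    ((hB.weightedCovariance hr).apply_self_nonneg u) ?_
  have weight_le_one (i : ι) : r i ≤ 1 :=
    hr.2 ▸ Finset.single_le_sum (fun k _ => hr.1 k) (Finset.mem_univ i)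
  calc weightedCovariance B r u u ≤ ∑ i, r i • B (u i) (u i) := by
        rw [weightedCovariance_apply]
        exact sub_le_self _ (hB.apply_self_nonneg _)
    _ ≤ ∑ i, B (u i) (u i) := Finset.sum_le_sum fun i _ =>
        smul_le_of_le_one_left (hB.apply_self_nonneg _) (weight_le_one i)

theorem norm_weightedCovariance_le (hB : IsSemiInnerProduct B act)
    (hr : r ∈ stdSimplex ℝ ι) (u v : ι → X) (w z : X) :
    ‖weightedCovariance B r u v‖ ≤
      √‖∑ i, B (u i - w) (u i - w)‖ * √‖∑ i, B (v i - z) (v i - z)‖ := by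
  rw [← weightedCovariance_sub_const B hr.2 u v w z, ← Real.sqrt_mul (norm_nonneg _)]
  refine Real.le_sqrt_of_sq_le (((hB.weightedCovariance hr).norm_apply_sq_le _ _).trans ?_)
  gcongr <;> exact hB.norm_weightedCovariance_self_le hr _

end IsSemiInnerProduct

theorem stmt_8_general {A : Type*} [NonUnitalCStarAlgebra A] [PartialOrder A] [StarOrderedRing A]
    {X : Type*} [SeminormedAddCommGroup X] [NormedSpace ℝ X] {B : X →ₗ[ℝ] X →ₗ[ℝ] A}
    {act : X → A → X} (hB : IsSemiInnerProduct B act) (h_norm : ∀ x : X, ‖x‖ = √‖B x x‖)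
    (x₀ y₀ x₁ y₁ : X) {ι : Type*} [Fintype ι] {r : ι → ℝ} (hr : r ∈ stdSimplex ℝ ι)
    {f g : ι → A → X} {f' g' : ι → A →L[ℝ] X} {p : A}
    (hf : ∀ i, HasFDerivAt (f i) (f' i) p) (hg : ∀ i, HasFDerivAt (g i) (g' i) p)
    (hfop : ∀ b : A,
      √‖∑ i, B (f' i b - act ((2⁻¹ : ℝ) • (x₀ + y₀)) b) (f' i b - act ((2⁻¹ : ℝ) • (x₀ + y₀)) b)‖
        ≤ ‖(2⁻¹ : ℝ) • (x₀ - y₀)‖ * ‖b‖)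
    (hgop : ∀ b : A,
      √‖∑ i, B (g' i b - act ((2⁻¹ : ℝ) • (x₁ + y₁)) b) (g' i b - act ((2⁻¹ : ℝ) • (x₁ + y₁)) b)‖
        ≤ ‖(2⁻¹ : ℝ) • (x₁ - y₁)‖ * ‖b‖) (a : A) :
    ‖(∑ i, r i • B (f' i a) (g' i a)) - B (∑ i, r i • f' i a) (∑ i, r i • g' i a)‖
      ≤ (1 / 4) * ‖x₀ - y₀‖ * ‖x₁ - y₁‖ * ‖a‖ ^ 2 := by
  have gruss := hB.norm_weightedCovariance_le hr (fun i => f' i a) (fun i => g' i a)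
    (act ((2⁻¹ : ℝ) • (x₀ + y₀)) a) (act ((2⁻¹ : ℝ) • (x₁ + y₁)) a)
  rw [weightedCovariance_apply] at gruss
  calc _ ≤ (‖(2⁻¹ : ℝ) • (x₀ - y₀)‖ * ‖a‖) * (‖(2⁻¹ : ℝ) • (x₁ - y₁)‖ * ‖a‖) :=
        gruss.trans (by gcongr; exacts [hfop a, hgop a])
    _ = (1 / 4) * ‖x₀ - y₀‖ * ‖x₁ - y₁‖ * ‖a‖ ^ 2 := by
        rw [norm_smul, norm_smul, Real.norm_of_nonneg (by norm_num : (0 : ℝ) ≤ 2⁻¹)]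
        ring

/-- Grüss type inequality in D_p(A,Xⁿ): if ‖Df(p) − \hat{(x₀+y₀)/2}‖ ≤ ‖(x₀−y₀)/2‖ and
‖Dg(p) − \hat{(x₁+y₁)/2}‖ ≤ ‖(x₁−y₁)/2‖ (operator norms, with Xⁿ carrying the norm
‖u‖ = ‖Σᵢ⟨uᵢ,uᵢ⟩‖^{1/2}), then for all a ∈ A,
‖Σᵢ rᵢ⟨Dfᵢ(p)(a), Dgᵢ(p)(a)⟩ − ⟨Σᵢ rᵢDfᵢ(p)(a), Σᵢ rᵢDgᵢ(p)(a)⟩‖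
  ≤ (1/4)‖x₀−y₀‖‖x₁−y₁‖‖a‖². -/
theorem stmt_8 {A : Type*} [NormedRing A] [StarRing A] [CStarRing A] [PartialOrder A]
    [StarOrderedRing A] [NormedAlgebra ℂ A] [CompleteSpace A]
    {X : Type*} [NormedAddCommGroup X] [NormedSpace ℝ X]
    (smul : X → A → X)
    (ip : X → X → A)
    (h_add : ∀ x y z : X, ip x (y + z) = ip x y + ip x z)
    (h_add' : ∀ x y z : X, ip (x + y) z = ip x z + ip y z)
    (h_smul : ∀ (x y : X) (a : A), ip x (smul y a) = ip x y * a)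
    (h_rsmul : ∀ (c : ℝ) (x y : X), ip x (c • y) = c • ip x y)
    (h_rsmul' : ∀ (c : ℝ) (x y : X), ip (c • x) y = c • ip x y)
    (h_star : ∀ x y : X, star (ip x y) = ip y x)
    (h_pos : ∀ x : X, 0 ≤ ip x x)
    (h_norm : ∀ x : X, ‖x‖ = Real.sqrt ‖ip x x‖)
    (x₀ y₀ x₁ y₁ : X)
    (n : ℕ) (r : Fin n → ℝ) (hr : ∀ i, 0 ≤ r i) (hr1 : ∑ i, r i = 1)
    (f g : Fin n → A → X) (f' g' : Fin n → A →L[ℝ] X) (p : A)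
    (hf : ∀ i, HasFDerivAt (f i) (f' i) p) (hg : ∀ i, HasFDerivAt (g i) (g' i) p)
    (hfop : ∀ b : A,
      Real.sqrt ‖∑ i, ip (f' i b - smul ((2⁻¹ : ℝ) • (x₀ + y₀)) b)
                       (f' i b - smul ((2⁻¹ : ℝ) • (x₀ + y₀)) b)‖
        ≤ ‖(2⁻¹ : ℝ) • (x₀ - y₀)‖ * ‖b‖)
    (hgop : ∀ b : A,
      Real.sqrt ‖∑ i, ip (g' i b - smul ((2⁻¹ : ℝ) • (x₁ + y₁)) b)
                       (g' i b - smul ((2⁻¹ : ℝ) • (x₁ + y₁)) b)‖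
        ≤ ‖(2⁻¹ : ℝ) • (x₁ - y₁)‖ * ‖b‖) :
    ∀ a : A,
      ‖(∑ i, r i • ip (f' i a) (g' i a))
          - ip (∑ i, r i • (f' i a)) (∑ i, r i • (g' i a))‖
        ≤ (1 / 4) * ‖x₀ - y₀‖ * ‖x₁ - y₁‖ * ‖a‖ ^ 2 := by
  let _ : CStarAlgebra A := { toStarModule := starModule_complex_of_starOrderedRing_s8 }
  exact stmt_8_general (B := .mk₂ ℝ ip h_add' h_rsmul' h_add h_rsmul) ⟨h_smul, h_star, h_pos⟩
    h_norm x₀ y₀ x₁ y₁ ⟨hr, hr1⟩ hf hg hfop hgop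
end

section
/- Let X be a semi-inner product C*-module over a C*-algebra A, x₀, y₀ ∈ X, p ∈ A, and f = (f₁,…,fₙ) : A → Xⁿ Fréchet differentiable at p with ‖Df(p) − \widehat{(x₀+y₀)/2}‖ ≤ ‖(x₀−y₀)/2‖. Then for all a ∈ A: ‖Σ_{k=1}^{n} k·Df_k(p)(a) − ((n+1)/2)·Σ_{k=1}^{n} Df_k(p)(a)‖ ≤ (‖a‖‖x₀−y₀‖n/4)·((n−1)(n+1)/3)^{1/2}. -/
/-!
If `∑ cᵢ = 0`, then `∑ cᵢ vᵢ = ∑ cᵢ (vᵢ - w)` for every center `w`, and the Cauchy–Schwarz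
inequality bounds its norm by `√(∑ cᵢ²) √‖∑ ⟪vᵢ - w, vᵢ - w⟫‖`. Here `cₖ = k - (n + 1) / 2`, whose
squares sum to `n (n - 1) (n + 1) / 12`, `vₖ = Df_k(p)(a)`, and `w` is the action of `a` on
`(x₀ + y₀) / 2`.

Passing from order to norm uses that `0 ≤ a ≤ b` implies `‖a‖ ≤ ‖b‖` in a C⋆-algebra, where the
involution is conjugate linear. Conjugate linearity is forced by the order: if
`star (I • b) = I • star b`, then `star b * b` and `star (I • b) * (I • b) = -(star b * b)` are both
nonnegative, so `b = 0`; this applies to `b = star (I • a) + I • star a` for every `a`.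
-/

section ConjugateLinear

theorem star_smul_star_mul {R A : Type*} [NonUnitalNonAssocSemiring A] [StarRing A] [SMul R A]
    [SMulCommClass R A A] (r : R) (a b : A) :
    star (r • star (a * b)) = star (r • star a) * b := by
  rw [star_mul, ← mul_smul_comm, star_mul, star_star]

variable {A : Type*} [NonUnitalNormedRing A] [StarRing A] [CStarRing A]

theorem star_smul_star_smul_comm {R S : Type*} [SMul R A] [SMulCommClass R A A]
    [SMul S A] [SMulCommClass S A A] [IsScalarTower S A A] (r : R) (s : S) (a : A) :
    star (r • star (s • a)) = s • star (r • star a) := by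
  have h_mul (b : A) : star (r • star (s • a)) * b = (s • star (r • star a)) * b := by
    rw [← star_smul_star_mul, smul_mul_assoc, ← mul_smul_comm, star_smul_star_mul, mul_smul_comm,
      smul_mul_assoc]
  rw [← sub_eq_zero, ← CStarRing.mul_star_self_eq_zero_iff, sub_mul, h_mul, sub_self]

variable [PartialOrder A] [StarOrderedRing A] [NormedSpace ℂ A] [IsScalarTower ℂ A A]
  [SMulCommClass ℂ A A]

theorem eq_zero_of_star_I_smul_eq {b : A} (hb : star (Complex.I • b) = Complex.I • star b) :
    b = 0 := by
  have h_neg : star (Complex.I • b) * (Complex.I • b) = -(star b * b) := by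
    rw [hb, smul_mul_smul_comm, Complex.I_mul_I, neg_one_smul]
  have h_nonpos : star b * b ≤ 0 := neg_nonneg.mp (h_neg ▸ star_mul_self_nonneg (Complex.I • b))
  exact CStarRing.star_mul_self_eq_zero_iff b |>.mp (h_nonpos.antisymm (star_mul_self_nonneg b))

theorem star_I_smul (a : A) : star (Complex.I • a) = -(Complex.I • star a) := by
  rw [← add_eq_zero_iff_eq_neg]
  apply eq_zero_of_star_I_smul_eq
  simp only [smul_add, star_add, star_smul_star_smul_comm, smul_smul, Complex.I_mul_I,
    neg_one_smul, star_neg, star_star]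
  exact add_comm _ _

theorem starModule_complex_of_starOrderedRing_s10 : StarModule ℂ A where
  star_smul c a := by
    have h_real (r : ℝ) (b : A) : star ((r : ℂ) • b) = (r : ℂ) • star b := by
      simpa using map_real_smul (starAddEquiv : A ≃+ A) continuous_star r b
    obtain ⟨x, y⟩ := c
    rw [Complex.mk_eq_add_mul_I, add_smul, star_add, mul_smul, h_real, h_real, star_I_smul]
    simp [add_smul, mul_smul]

end ConjugateLinear

section CauchySchwarz

theorem apply_sum_smul_self_le {𝕜 A X ι : Type*} [Field 𝕜] [LinearOrder 𝕜] [IsStrictOrderedRing 𝕜]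
    [AddCommGroup A] [PartialOrder A] [IsOrderedAddMonoid A] [Module 𝕜 A] [PosSMulMono 𝕜 A]
    [AddCommGroup X] [Module 𝕜 X] (B : X →ₗ[𝕜] X →ₗ[𝕜] A) (h_pos : ∀ x, 0 ≤ B x x)
    (s : Finset ι) (c : ι → 𝕜) (z : ι → X) :
    B (∑ i ∈ s, c i • z i) (∑ i ∈ s, c i • z i) ≤ (∑ i ∈ s, c i ^ 2) • ∑ i ∈ s, B (z i) (z i) := by
  set Z := ∑ i ∈ s, c i • z i with hZ
  set S := ∑ i ∈ s, c i ^ 2 with hS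
  have hS_nonneg : 0 ≤ S := Finset.sum_nonneg fun i _ => sq_nonneg (c i)
  rcases hS_nonneg.eq_or_lt' with hS_zero | hS_pos
  · have hc : ∀ i ∈ s, c i = 0 := fun i hi => pow_eq_zero_iff two_ne_zero |>.mp <|
      (Finset.sum_eq_zero_iff_of_nonneg fun j _ => sq_nonneg (c j)).mp hS_zero i hi
    have hZ_zero : Z = 0 := Finset.sum_eq_zero fun i hi => by rw [hc i hi, zero_smul]
    simp [hZ_zero, hS_zero]
  · have h_left (x : X) : ∑ i ∈ s, c i • B (z i) x = B Z x := by
      simp only [hZ, map_sum, map_smul, LinearMap.sum_apply, LinearMap.smul_apply]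
    have h_right (x : X) : ∑ i ∈ s, c i • B x (z i) = B x Z := by
      simp only [hZ, map_sum, map_smul]
    -- `S • z i - c i • Z` is `S` times the residual of projecting `z` onto the multiples of `c`.
    have h_expand : ∑ i ∈ s, B (S • z i - c i • Z) (S • z i - c i • Z)
        = S • (S • ∑ i ∈ s, B (z i) (z i) - B Z Z) := by
      calc _ = ∑ i ∈ s, (S • S • B (z i) (z i) - S • (c i • B (z i) Z) - S • (c i • B Z (z i))
              + c i ^ 2 • B Z Z) := by
            refine Finset.sum_congr rfl fun i _ => ?_
            simp only [map_sub, map_smul, LinearMap.sub_apply, LinearMap.smul_apply]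
            module
        _ = S • S • ∑ i ∈ s, B (z i) (z i) - S • B Z Z - S • B Z Z + S • B Z Z := by
            simp only [Finset.sum_add_distrib, Finset.sum_sub_distrib, ← Finset.smul_sum,
              ← Finset.sum_smul, h_left, h_right, ← hS]
        _ = _ := by module
    have h_smul : 0 ≤ S • (S • ∑ i ∈ s, B (z i) (z i) - B Z Z) :=
      h_expand ▸ Finset.sum_nonneg fun i _ => h_pos _
    exact sub_nonneg.mp (nonneg_of_smul_nonneg_of_pos_left h_smul hS_pos)

variable {A X ι : Type*} [NonUnitalNormedRing A] [StarRing A] [CStarRing A] [PartialOrder A]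
  [StarOrderedRing A] [NormedSpace ℂ A] [IsScalarTower ℂ A A] [SMulCommClass ℂ A A]
  [CompleteSpace A] [SeminormedAddCommGroup X] [NormedSpace ℝ X]

theorem norm_sum_smul_le_sqrt_mul_sqrt (B : X →ₗ[ℝ] X →ₗ[ℝ] A) (h_pos : ∀ x, 0 ≤ B x x)
    (h_norm : ∀ x, ‖x‖ = √‖B x x‖) (s : Finset ι) (c : ι → ℝ) (z : ι → X) :
    ‖∑ i ∈ s, c i • z i‖ ≤ √(∑ i ∈ s, c i ^ 2) * √‖∑ i ∈ s, B (z i) (z i)‖ := by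
  have := starModule_complex_of_starOrderedRing_s10 (A := A)
  let _ : NonUnitalCStarAlgebra A := {}
  have hS : 0 ≤ ∑ i ∈ s, c i ^ 2 := Finset.sum_nonneg fun i _ => sq_nonneg (c i)
  calc _ = √‖B (∑ i ∈ s, c i • z i) (∑ i ∈ s, c i • z i)‖ := h_norm _
    _ ≤ √‖(∑ i ∈ s, c i ^ 2) • ∑ i ∈ s, B (z i) (z i)‖ :=
        Real.sqrt_le_sqrt <| CStarAlgebra.norm_le_norm_of_nonneg_of_le (h_pos _)
          (apply_sum_smul_self_le B h_pos s c z)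
    _ = _ := by rw [norm_smul, Real.norm_of_nonneg hS, Real.sqrt_mul hS]

theorem norm_sum_smul_le_of_sum_eq_zero (B : X →ₗ[ℝ] X →ₗ[ℝ] A) (h_pos : ∀ x, 0 ≤ B x x)
    (h_norm : ∀ x, ‖x‖ = √‖B x x‖) {s : Finset ι} {c : ι → ℝ} (hc : ∑ i ∈ s, c i = 0)
    (v : ι → X) (w : X) :
    ‖∑ i ∈ s, c i • v i‖ ≤ √(∑ i ∈ s, c i ^ 2) * √‖∑ i ∈ s, B (v i - w) (v i - w)‖ := by
  have h_center : ∑ i ∈ s, c i • v i = ∑ i ∈ s, c i • (v i - w) := by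
    simp only [smul_sub, Finset.sum_sub_distrib, ← Finset.sum_smul, hc, zero_smul, sub_zero]
  rw [h_center]
  exact norm_sum_smul_le_sqrt_mul_sqrt B h_pos h_norm s c fun i => v i - w

end CauchySchwarz

section Variance

variable {K : Type*} [Field K] [CharZero K]

theorem sum_fin_add_one_sub (n : ℕ) (t : K) :
    ∑ k : Fin n, ((k : K) + 1 - t) = n * ((n + 1) / 2 - t) := by
  induction n with
  | zero => simp
  | succ n ih =>
    simp only [Fin.sum_univ_castSucc, Fin.val_castSucc, Fin.val_last, ih]
    push_cast
    ring

theorem sum_fin_add_one_sub_sq (n : ℕ) (t : K) :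
    ∑ k : Fin n, ((k : K) + 1 - t) ^ 2
      = n * ((n - 1) * (n + 1) / 12 + ((n + 1) / 2 - t) ^ 2) := by
  induction n with
  | zero => simp
  | succ n ih =>
    simp only [Fin.sum_univ_castSucc, Fin.val_castSucc, Fin.val_last, ih]
    push_cast
    ring

end Variance

theorem sqrt_natCast_le_self (n : ℕ) : √(n : ℝ) ≤ n :=
  Real.sqrt_le_iff.mpr ⟨n.cast_nonneg, by exact_mod_cast Nat.le_self_pow two_ne_zero n⟩

theorem stmt_10_general {A X : Type*} [NonUnitalNormedRing A] [StarRing A] [CStarRing A]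
    [PartialOrder A] [StarOrderedRing A] [NormedSpace ℂ A] [IsScalarTower ℂ A A]
    [SMulCommClass ℂ A A] [CompleteSpace A] [SeminormedAddCommGroup X] [NormedSpace ℝ X]
    (B : X →ₗ[ℝ] X →ₗ[ℝ] A) (h_pos : ∀ x, 0 ≤ B x x) (h_norm : ∀ x, ‖x‖ = √‖B x x‖)
    {n : ℕ} {v : Fin n → X} {w : X} {R : ℝ} (hR : √‖∑ k, B (v k - w) (v k - w)‖ ≤ R) :
    ‖∑ k : Fin n, ((k : ℝ) + 1) • v k - (((n : ℝ) + 1) / 2) • ∑ k, v k‖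
      ≤ √n / 2 * √(((n : ℝ) - 1) * ((n : ℝ) + 1) / 3) * R := by
  set c : Fin n → ℝ := fun k => (k : ℝ) + 1 - ((n : ℝ) + 1) / 2
  have hc_sum : ∑ k, c k = 0 := by rw [sum_fin_add_one_sub, sub_self, mul_zero]
  have hc_sq : √(∑ k, c k ^ 2) = √n / 2 * √(((n : ℝ) - 1) * ((n : ℝ) + 1) / 3) := by
    have h_four : √(4 : ℝ) = 2 := by rw [Real.sqrt_eq_iff_mul_self_eq] <;> norm_num
    rw [sum_fin_add_one_sub_sq, div_mul_eq_mul_div, ← Real.sqrt_mul n.cast_nonneg, ← h_four,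
      ← Real.sqrt_div' _ (by norm_num)]
    ring_nf
  calc _ = ‖∑ k, c k • v k‖ := by
        simp only [c, sub_smul _ (((n : ℝ) + 1) / 2), Finset.sum_sub_distrib, Finset.smul_sum]
    _ ≤ √(∑ k, c k ^ 2) * √‖∑ k, B (v k - w) (v k - w)‖ :=
        norm_sum_smul_le_of_sum_eq_zero B h_pos h_norm hc_sum v w
    _ ≤ _ := by rw [hc_sq]; gcongr

/-- Special case rᵢ = 1/n, αₖ = k of the weighted Grüss inequality:
‖Σₖ k·Df_k(p)(a) − ((n+1)/2)·Σₖ Df_k(p)(a)‖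
  ≤ (‖a‖‖x₀−y₀‖n/4)·((n−1)(n+1)/3)^{1/2}. -/
theorem stmt_10 {A : Type*} [NormedRing A] [StarRing A] [CStarRing A] [PartialOrder A]
    [StarOrderedRing A] [NormedAlgebra ℂ A] [CompleteSpace A]
    {X : Type*} [NormedAddCommGroup X] [NormedSpace ℝ X]
    (smul : X → A → X)
    (ip : X → X → A)
    (h_add : ∀ x y z : X, ip x (y + z) = ip x y + ip x z)
    (h_add' : ∀ x y z : X, ip (x + y) z = ip x z + ip y z)
    (h_smul : ∀ (x y : X) (a : A), ip x (smul y a) = ip x y * a)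
    (h_rsmul : ∀ (c : ℝ) (x y : X), ip x (c • y) = c • ip x y)
    (h_rsmul' : ∀ (c : ℝ) (x y : X), ip (c • x) y = c • ip x y)
    (h_star : ∀ x y : X, star (ip x y) = ip y x)
    (h_pos : ∀ x : X, 0 ≤ ip x x)
    (h_norm : ∀ x : X, ‖x‖ = Real.sqrt ‖ip x x‖)
    (x₀ y₀ : X) (n : ℕ)
    (f : Fin n → A → X) (f' : Fin n → A →L[ℝ] X) (p : A)
    (hf : ∀ i, HasFDerivAt (f i) (f' i) p)
    (hfop : ∀ b : A,
      Real.sqrt ‖∑ i, ip (f' i b - smul ((2⁻¹ : ℝ) • (x₀ + y₀)) b)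
                       (f' i b - smul ((2⁻¹ : ℝ) • (x₀ + y₀)) b)‖
        ≤ ‖(2⁻¹ : ℝ) • (x₀ - y₀)‖ * ‖b‖) :
    ∀ a : A,
      ‖(∑ k : Fin n, ((k : ℝ) + 1) • (f' k a))
          - (((n : ℝ) + 1) / 2) • ∑ k : Fin n, (f' k a)‖
        ≤ ‖a‖ * ‖x₀ - y₀‖ * (n : ℝ) / 4 *
            Real.sqrt (((n : ℝ) - 1) * ((n : ℝ) + 1) / 3) := by
  intro a
  refine (stmt_10_general (LinearMap.mk₂ ℝ ip h_add' h_rsmul' h_add h_rsmul) h_pos h_norm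
    (hfop a)).trans ?_
  grw [sqrt_natCast_le_self n, norm_smul, Real.norm_of_nonneg (by norm_num)]
  exact le_of_eq (by ring)
end
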